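/- For h = 4, the boundary map ∂ is surjective onto the automorphisms of the boundary forms: for every group automorphism φ of ℤ⁴/A₄ℤ⁴ satisfying ∂λ(φ(ξ),φ(η)) = ∂λ(ξ,η) and ∂θ(φ(ξ)) = ∂θ(ξ) for all ξ, η, there exists P ∈ GL₄(ℤ) with P^T A₄ P = A₄ such that φ([x]) = [(P^T)^{-1} x] for all x ∈ ℤ⁴. Equivalently, the boundary automorphism set bAut(ℤ⁴, [Q₄]) is trivial. -/

import Mathlib

open Matrix

noncomputable section

/-- The matrix `Q_h`: first row all `4`; in rows `2,…,h` diagonal and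
above-diagonal entries are `2`, below-diagonal entries are `0`. -/
def Qmat (h : ℕ) : Matrix (Fin h) (Fin h) ℤ :=
  Matrix.of fun i j => if (i : ℕ) = 0 then 4 else if i ≤ j then 2 else 0

/-- `A_h = Q_h + Q_hᵀ`. -/
def Amat (h : ℕ) : Matrix (Fin h) (Fin h) ℤ := Qmat h + (Qmat h)ᵀ

/-- `A_h` viewed as a rational matrix. -/
def AmatQ (h : ℕ) : Matrix (Fin h) (Fin h) ℚ := (Amat h).map (Int.cast)

/-- `Q_h` viewed as a rational matrix. -/
def QmatQ (h : ℕ) : Matrix (Fin h) (Fin h) ℚ := (Qmat h).map (Int.cast)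

/-- The cokernel `ℤ^h / A_h ℤ^h`. -/
abbrev Coker (h : ℕ) := (Fin h → ℤ) ⧸ LinearMap.range ((Amat h).mulVecLin)

/-- The quotient map `ℤ^h → ℤ^h / A_h ℤ^h`. -/
def ckMk {h : ℕ} (x : Fin h → ℤ) : Coker h := Submodule.Quotient.mk x

def ratVec {h : ℕ} (x : Fin h → ℤ) : Fin h → ℚ := fun i => (x i : ℚ)

/-- The boundary linking form `∂λ` computed on representatives:
`x ᵀ A_h⁻¹ y mod ℤ`, valued in `ℚ/ℤ`. -/
def linkR (h : ℕ) (x y : Fin h → ℤ) : AddCircle (1 : ℚ) :=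
  ((ratVec x ⬝ᵥ ((AmatQ h)⁻¹ *ᵥ ratVec y) : ℚ) : AddCircle (1 : ℚ))

/-- The boundary quadratic form `∂θ` computed on representatives:
`xᵀ A_h⁻¹ Q_h A_h⁻¹ x mod ℤ`, valued in `ℚ/ℤ`. -/
def quadR (h : ℕ) (x : Fin h → ℤ) : AddCircle (1 : ℚ) :=
  ((ratVec x ⬝ᵥ (((AmatQ h)⁻¹ * QmatQ h * (AmatQ h)⁻¹) *ᵥ ratVec x) : ℚ) : AddCircle (1 : ℚ))

/-- The Gram form `4 A₄⁻¹` (the Cartan form of type `D₄`). -/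
def gf (x y : Fin 4 → ℤ) : ℤ :=
  x 0 * (2 * y 0 - y 1 - y 2 - y 3) + x 1 * (2 * y 1 - y 0) + x 2 * (2 * y 2 - y 0)
    + x 3 * (2 * y 3 - y 0)

def Gm : Matrix (Fin 4) (Fin 4) ℤ := !![2, -1, -1, -1; -1, 2, 0, 0; -1, 0, 2, 0; -1, 0, 0, 2]

lemma Amat4 : Amat 4 = !![8, 4, 4, 4; 4, 4, 2, 2; 4, 2, 4, 2; 4, 2, 2, 4] := by
  ext i j
  fin_cases i <;> fin_cases j <;> simp [Amat, Qmat]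

lemma Qmat4 : Qmat 4 = !![4, 4, 4, 4; 0, 2, 2, 2; 0, 0, 2, 2; 0, 0, 0, 2] := by
  ext i j
  fin_cases i <;> fin_cases j <;> simp [Qmat]

lemma QmatQ4 : QmatQ 4 = !![4, 4, 4, 4; 0, 2, 2, 2; 0, 0, 2, 2; 0, 0, 0, 2] := by
  rw [QmatQ, Qmat4]
  ext i j
  fin_cases i <;> fin_cases j <;> simp

lemma AmatQ4_inv : (AmatQ 4)⁻¹ = !![1/2, -1/4, -1/4, -1/4; -1/4, 1/2, 0, 0;
    -1/4, 0, 1/2, 0; -1/4, 0, 0, 1/2] := by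
  apply Matrix.inv_eq_right_inv
  rw [AmatQ, Amat4]
  ext i j
  fin_cases i <;> fin_cases j <;>
    simp [Matrix.mul_apply, Fin.sum_univ_four] <;> norm_num

lemma linkR4 (x y : Fin 4 → ℤ) : linkR 4 x y = (((gf x y : ℚ) / 4 : ℚ) : AddCircle (1 : ℚ)) := by
  rw [linkR, AmatQ4_inv]
  congr 1
  simp [dotProduct, mulVec, Fin.sum_univ_four, ratVec, gf]
  ring

lemma quadR4 (x : Fin 4 → ℤ) : quadR 4 x = (((gf x x : ℚ) / 8 : ℚ) : AddCircle (1 : ℚ)) := by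
  rw [quadR, AmatQ4_inv, QmatQ4, ← Matrix.mulVec_mulVec, ← Matrix.mulVec_mulVec]
  congr 1
  simp [dotProduct, mulVec, Fin.sum_univ_four, ratVec, gf]
  ring

lemma circle_eq (a b : ℚ) (h : (a : AddCircle (1 : ℚ)) = b) : ∃ k : ℤ, (k : ℚ) = a - b := by
  have h2 := (QuotientAddGroup.eq_iff_sub_mem (N := AddSubgroup.zmultiples (1 : ℚ))).1 h
  obtain ⟨k, hk⟩ := AddSubgroup.mem_zmultiples_iff.1 h2
  exact ⟨k, by simpa using hk⟩

lemma ckMk_eq (x y : Fin 4 → ℤ)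
    (h0 : 4 ∣ 2 * (x 0 - y 0) - (x 1 - y 1) - (x 2 - y 2) - (x 3 - y 3))
    (h1 : 4 ∣ 2 * (x 1 - y 1) - (x 0 - y 0))
    (h2 : 4 ∣ 2 * (x 2 - y 2) - (x 0 - y 0))
    (h3 : 4 ∣ 2 * (x 3 - y 3) - (x 0 - y 0)) : ckMk x = ckMk y := by
  obtain ⟨a, ha⟩ := h0
  obtain ⟨b, hb⟩ := h1
  obtain ⟨c, hc⟩ := h2
  obtain ⟨d, hd⟩ := h3
  refine (Submodule.Quotient.eq _).2 ⟨![a, b, c, d], ?_⟩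
  rw [Amat4]
  ext i
  fin_cases i <;> simp [mulVec, dotProduct, Fin.sum_univ_four] <;> lia

def roots : List (ℤ × ℤ × ℤ × ℤ) := [(-2, -1, -1, -1), (-1, -1, -1, -1), (-1, -1, -1, 0), (-1, -1, 0, -1), (-1, -1, 0, 0), (-1, 0, -1, -1), (-1, 0, -1, 0), (-1, 0, 0, -1), (-1, 0, 0, 0), (0, -1, 0, 0), (0, 0, -1, 0), (0, 0, 0, -1), (0, 0, 0, 1), (0, 0, 1, 0), (0, 1, 0, 0), (1, 0, 0, 0), (1, 0, 0, 1), (1, 0, 1, 0), (1, 0, 1, 1), (1, 1, 0, 0), (1, 1, 0, 1), (1, 1, 1, 0), (1, 1, 1, 1), (2, 1, 1, 1)]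

lemma roots_norm : ∀ u ∈ roots, gf ![u.1, u.2.1, u.2.2.1, u.2.2.2] ![u.1, u.2.1, u.2.2.1, u.2.2.2] = 2 := by
  simp [roots, gf]

lemma roots_cover : ∀ a b c d : Fin 4,
    (2 * (a:ℕ)*(a:ℕ) + 2*(b:ℕ)*(b:ℕ) + 2*(c:ℕ)*(c:ℕ) + 2*(d:ℕ)*(d:ℕ)
      + 6 * (a:ℕ) * ((b:ℕ) + (c:ℕ) + (d:ℕ))) % 8 = 2 →
    ∃ u ∈ roots, (2 * ((a:ℕ) - u.1) - ((b:ℕ) - u.2.1) - ((c:ℕ) - u.2.2.1) - ((d:ℕ) - u.2.2.2)) % 4 = 0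
      ∧ (2 * ((b:ℕ) - u.2.1) - ((a:ℕ) - u.1)) % 4 = 0
      ∧ (2 * ((c:ℕ) - u.2.2.1) - ((a:ℕ) - u.1)) % 4 = 0
      ∧ (2 * ((d:ℕ) - u.2.2.2) - ((a:ℕ) - u.1)) % 4 = 0 := by
  decide +kernel

lemma red4 (n : ℤ) : ∃ (a : Fin 4) (k : ℤ), n = ((a : ℕ) : ℤ) + 4 * k :=
  ⟨⟨(n % 4).toNat, by lia⟩, n / 4, by simp; lia⟩

lemma exists_root (x : Fin 4 → ℤ) (m : ℤ) (hx : gf x x = 2 + 8 * m) :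
    ∃ u : Fin 4 → ℤ, gf u u = 2 ∧ ckMk u = ckMk x := by
  obtain ⟨a, a', ha⟩ := red4 (x 0)
  obtain ⟨b, b', hb⟩ := red4 (x 1)
  obtain ⟨c, c', hc⟩ := red4 (x 2)
  obtain ⟨d, d', hd⟩ := red4 (x 3)
  have key := roots_cover a b c d (by
    zify
    rw [gf, ha, hb, hc, hd] at hx
    generalize ((a : ℕ) : ℤ) = a at *
    generalize ((b : ℕ) : ℤ) = b at *
    generalize ((c : ℕ) : ℤ) = c at *
    generalize ((d : ℕ) : ℤ) = d at *
    have : 2 * a * a + 2 * b * b + 2 * c * c + 2 * d * d + 6 * a * (b + c + d)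
      = 2 + 8 * (m + a * (b + c + d) - (2 * a * a' + 4 * a' * a' + 2 * b * b' + 4 * b' * b'
        + 2 * c * c' + 4 * c' * c' + 2 * d * d' + 4 * d' * d')
        + (a * (b' + c' + d') + a' * (b + c + d) + 4 * a' * (b' + c' + d'))) := by
      linear_combination hx
    lia)
  obtain ⟨u, hu, h0, h1, h2, h3⟩ := key
  refine ⟨_, roots_norm u hu, ?_⟩
  apply ckMk_eq <;> simp <;> lia

lemma gf_bound (u v : Fin 4 → ℤ) (hu : gf u u = 2) (hv : gf v v = 2) :
    -2 ≤ gf u v ∧ gf u v ≤ 2 := by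
  simp only [gf] at *
  constructor
  · nlinarith [sq_nonneg (u 0 + v 0), sq_nonneg (2 * (u 1 + v 1) - (u 0 + v 0)),
      sq_nonneg (2 * (u 2 + v 2) - (u 0 + v 0)), sq_nonneg (2 * (u 3 + v 3) - (u 0 + v 0))]
  · nlinarith [sq_nonneg (u 0 - v 0), sq_nonneg (2 * (u 1 - v 1) - (u 0 - v 0)),
      sq_nonneg (2 * (u 2 - v 2) - (u 0 - v 0)), sq_nonneg (2 * (u 3 - v 3) - (u 0 - v 0))]

lemma gf_Gm (x y : Fin 4 → ℤ) : gf x y = x ⬝ᵥ (Gm *ᵥ y) := by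
  simp [dotProduct, mulVec, Fin.sum_univ_four, gf, Gm]
  ring

lemma GA : Gm * Amat 4 = (4 : ℤ) • (1 : Matrix (Fin 4) (Fin 4) ℤ) := by
  rw [Amat4, Gm]; decide

lemma AG : Amat 4 * Gm = (4 : ℤ) • (1 : Matrix (Fin 4) (Fin 4) ℤ) := by
  rw [Amat4, Gm]; decide

lemma Gm_single (i j : Fin 4) : gf (Pi.single i 1) (Pi.single j 1) = Gm i j := by
  rw [gf_Gm]; simp

lemma Gm_det : Gm.det ≠ 0 := by
  intro h
  have h1 := congrArg Matrix.det GA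
  rw [Matrix.det_mul, h, Matrix.det_smul] at h1
  simp at h1

lemma Gm_cases (i j : Fin 4) : i ≠ j → Gm i j = 0 ∨ Gm i j = -1 := by
  fin_cases i <;> fin_cases j <;> simp [Gm]

lemma Gm_diag (i : Fin 4) : Gm i i = 2 := by
  fin_cases i <;> simp [Gm]


/-- For h = 4, every group automorphism of ℤ^4/A_4 ℤ^4 preserving the boundary linking
form ∂λ and the boundary quadratic form ∂θ is induced, via [x] ↦ [(Pᵀ)⁻¹ x], by an isometry
P ∈ GL_4(ℤ) of A_4; i.e. the boundary map ∂ is surjective and bAut(ℤ^4, [Q_4]) is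
trivial. -/
theorem boundary_map_surjective_h4 (φ : Coker 4 ≃+ Coker 4)
    (hlink : ∀ x y x' y' : Fin 4 → ℤ, ckMk x' = φ (ckMk x) → ckMk y' = φ (ckMk y) →
      linkR 4 x' y' = linkR 4 x y)
    (hquad : ∀ x x' : Fin 4 → ℤ, ckMk x' = φ (ckMk x) → quadR 4 x' = quadR 4 x) :
    ∃ P : Matrix (Fin 4) (Fin 4) ℤ, IsUnit P.det ∧ Pᵀ * Amat 4 * P = Amat 4 ∧
      ∀ x : Fin 4 → ℤ, φ (ckMk x) = ckMk ((Pᵀ)⁻¹ *ᵥ x) := by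
  have hu : ∀ i : Fin 4, ∃ u : Fin 4 → ℤ, gf u u = 2 ∧ ckMk u = φ (ckMk (Pi.single i 1)) := by
    intro i
    obtain ⟨x, hx⟩ := Submodule.Quotient.mk_surjective _ (φ (ckMk (Pi.single i 1)))
    have hq := hquad (Pi.single i 1) x hx
    rw [quadR4, quadR4] at hq
    obtain ⟨k, hk⟩ := circle_eq _ _ hq
    rw [Gm_single, Gm_diag] at hk
    have hg : gf x x = 2 + 8 * k := by
      have : (gf x x : ℚ) = 2 + 8 * k := by push_cast at hk; linarith
      exact_mod_cast this
    obtain ⟨u, h1, h2⟩ := exists_root x k hg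
    exact ⟨u, h1, h2.trans hx⟩
  choose u hu2 hucl using hu
  have hgram : ∀ i j, gf (u i) (u j) = Gm i j := by
    intro i j
    by_cases hij : i = j
    · subst hij; rw [hu2, Gm_diag]
    · have hl := hlink _ _ _ _ (hucl i) (hucl j)
      rw [linkR4, linkR4, Gm_single] at hl
      obtain ⟨k, hk⟩ := circle_eq _ _ hl
      have hg : gf (u i) (u j) = Gm i j + 4 * k := by
        have : (gf (u i) (u j) : ℚ) = Gm i j + 4 * k := by linarith
        exact_mod_cast this
      have hb := gf_bound _ _ (hu2 i) (hu2 j)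
      have hc := Gm_cases i j hij
      lia
  -- the matrix with columns `u i`
  obtain ⟨R, hR⟩ : ∃ R : Matrix (Fin 4) (Fin 4) ℤ, R = Matrix.of fun i j => u j i := ⟨_, rfl⟩
  have hRG : Rᵀ * Gm * R = Gm := by
    ext i j
    rw [← hgram, gf_Gm, Matrix.mul_assoc, hR]
    simp [Matrix.mul_apply, dotProduct, mulVec]
  have hdet : IsUnit R.det := by
    have h := congrArg Matrix.det hRG
    rw [Matrix.det_mul, Matrix.det_mul, Matrix.det_transpose] at h
    refine IsUnit.of_mul_eq_one R.det (mul_right_cancel₀ Gm_det ?_)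
    linarith
  have hdetT : IsUnit Rᵀ.det := by rwa [Matrix.det_transpose]
  have hRA : R * Amat 4 * Rᵀ = Amat 4 := by
    have e : (4 : ℤ) • (R * Amat 4 * Rᵀ) = (4 : ℤ) • Amat 4 := by
      have e1 : Rᵀ * (Gm * R * Amat 4) = (4 : ℤ) • 1 := by
        rw [← GA]; nth_rewrite 2 [← hRG]; simp only [Matrix.mul_assoc]
      have e2 : (Gm * R * Amat 4) * Rᵀ = (4 : ℤ) • 1 := by
        have : Rᵀ * ((Gm * R * Amat 4) * Rᵀ) = Rᵀ * ((4 : ℤ) • 1) := by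
          rw [← Matrix.mul_assoc, e1, Matrix.mul_smul, Matrix.smul_mul, Matrix.mul_one, Matrix.one_mul]
        have h3 := congrArg (fun M => Rᵀ⁻¹ * M) this
        simpa only [Matrix.nonsing_inv_mul_cancel_left _ _ hdetT] using h3
      have h4 := congrArg (fun M => Amat 4 * M) e2
      simp only [← Matrix.mul_assoc, AG, Matrix.smul_mul, Matrix.mul_smul, Matrix.one_mul,
        Matrix.mul_one] at h4
      exact h4
    exact smul_right_injective _ (by norm_num : (4 : ℤ) ≠ 0) e
  refine ⟨(R⁻¹)ᵀ, ?_, ?_, ?_⟩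
  · rw [Matrix.det_transpose]
    exact Matrix.isUnit_nonsing_inv_det _ hdet
  · rw [Matrix.transpose_transpose]
    nth_rewrite 1 [← hRA]
    rw [Matrix.transpose_nonsing_inv]
    simp only [Matrix.mul_assoc]
    rw [Matrix.nonsing_inv_mul_cancel_left _ _ hdet, Matrix.mul_nonsing_inv _ hdetT, Matrix.mul_one]
  · intro x
    rw [Matrix.transpose_transpose, Matrix.nonsing_inv_nonsing_inv _ hdet]
    let f : (Fin 4 → ℤ) →+ Coker 4 :=
      φ.toAddMonoidHom.comp (Submodule.mkQ (LinearMap.range ((Amat 4).mulVecLin))).toAddMonoidHom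
    let g : (Fin 4 → ℤ) →+ Coker 4 :=
      (Submodule.mkQ (LinearMap.range ((Amat 4).mulVecLin))).toAddMonoidHom.comp
        R.mulVecLin.toAddMonoidHom
    have hfg : f.toIntLinearMap = g.toIntLinearMap := by
      apply LinearMap.pi_ext'
      intro i
      apply LinearMap.ext_ring
      change φ (ckMk (Pi.single i 1)) = ckMk (R *ᵥ Pi.single i 1)
      rw [← hucl, hR]
      congr 1
      ext j
      simp
    exact LinearMap.congr_fun hfg x
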